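/- Let λ > 0, 0 < d_x ≤ λ/2, 0 < d_y ≤ λ/2 and d_z > 0, and let D = {(α,β) ∈ [0,π]² : (λα/(2πd_x))² + (λβ/(2πd_y))² ≤ 1} be the feasible region. For γ ∈ ℝ define f_γ : [0,π]² → ℝ by f_γ(α,β) = 1 − (1 + cos(γ − (2πd_z/λ)·√(1 − (λα/(2πd_x))² − (λβ/(2πd_y))²)))/2 for (α,β) ∈ D, and f_γ(α,β) = 1 for (α,β) ∉ D. Then 1 − (1/(2π²)) ∫₀^π ∫₀^π ( f_0(α,β) + f_π(α,β) ) dα dβ = π d_x d_y / (2λ²). In particular this 3D efficiency bound equals one half of the corresponding 2D Hannan limit π d_x d_y / λ². -/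

import Mathlib

/-!
The phases `γ = 0` and `γ = π` are complementary: since `cos (-x) + cos (π - x) = 0`, the sum
`f 0 + f π` is `1` on the feasible region and `2` off it, whatever the layer spacing. The double
integral is therefore `2π²` minus the area of the feasible region, which is the quarter of an
ellipse with semi-axes `u = 2π d_x / λ` and `v = 2π d_y / λ`; it fits inside `[0, π]²` because both
spacings are at most `λ / 2`. That area, `π u v / 4`, is computed by slices
(`integral_ellipse_slice`, `integral_sqrt_slice`).
-/

open Real MeasureTheory Classical

lemma integral_sqrt_quarter : ∫ x in (0 : ℝ)..1, √(1 - x ^ 2) = π / 4 := by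
  have hc : Continuous fun x : ℝ => √(1 - x ^ 2) := by fun_prop
  have h1 := integral_sqrt_one_sub_sq
  rw [← intervalIntegral.integral_add_adjacent_intervals (b := 0)
    (hc.intervalIntegrable _ _) (hc.intervalIntegrable _ _)] at h1
  have h2 : ∫ x in (-1 : ℝ)..0, √(1 - x ^ 2) = ∫ x in (0 : ℝ)..1, √(1 - x ^ 2) := by
    have := intervalIntegral.integral_comp_neg (a := 0) (b := 1) fun x : ℝ => √(1 - x ^ 2)
    simpa using this.symm
  linarith

/-- The slice heights integrate to the quarter-ellipse area over any interval containing `[0, u]`,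
because `√` vanishes on negative reals. -/
lemma integral_sqrt_slice {u b : ℝ} (hu : 0 < u) (hub : u ≤ b) :
    ∫ x in (0 : ℝ)..b, √(1 - (x / u) ^ 2) = u * (π / 4) := by
  have hc : Continuous fun x : ℝ => √(1 - x ^ 2) := by fun_prop
  have h1 : 1 ≤ b / u := by rwa [one_le_div hu]
  rw [intervalIntegral.integral_comp_div (fun x : ℝ => √(1 - x ^ 2)) hu.ne', zero_div,
    ← intervalIntegral.integral_add_adjacent_intervals (b := 1)
    (hc.intervalIntegrable _ _) (hc.intervalIntegrable _ _), integral_sqrt_quarter]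
  have h2 : ∫ x in (1 : ℝ)..(b / u), √(1 - x ^ 2) = 0 := by
    rw [← intervalIntegral.integral_zero (a := 1) (b := b / u) (E := ℝ)]
    refine intervalIntegral.integral_congr fun x hx => ?_
    rw [Set.uIcc_of_le h1] at hx
    exact Real.sqrt_eq_zero_of_nonpos (by nlinarith [hx.1])
  rw [h2, add_zero, smul_eq_mul]

/-- Integrating `1` on and `2` off an ellipse slice. The slice at `s = x / u` has height
`v * √(1 - s ^ 2)`, which is also right (up to a null set) when `1 < s ^ 2`, the root being `0`. -/
lemma integral_ellipse_slice {v b : ℝ} (s : ℝ) (hv : 0 < v) (hvb : v ≤ b) :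
    ∫ y in (0 : ℝ)..b, (if s ^ 2 + (y / v) ^ 2 ≤ 1 then (1 : ℝ) else 2) =
      2 * b - v * √(1 - s ^ 2) := by
  set c := v * √(1 - s ^ 2) with hcdef
  have hc0 : 0 ≤ c := by positivity
  have hcb : c ≤ b := by
    have : √(1 - s ^ 2) ≤ 1 := Real.sqrt_le_one.mpr (by nlinarith [sq_nonneg s])
    nlinarith
  have e1 : Set.EqOn (fun y : ℝ => if s ^ 2 + (y / v) ^ 2 ≤ 1 then (1 : ℝ) else 2)
      (fun _ => 1) (Set.uIoc 0 c) := by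
    intro y hy
    rw [Set.uIoc_of_le hc0] at hy
    have h : y / v ≤ √(1 - s ^ 2) := by rw [div_le_iff₀ hv]; linarith [hy.2]
    have h' : 0 < y / v := div_pos hy.1 hv
    have := (Real.le_sqrt' h').1 h
    exact if_pos (by linarith)
  have e2 : Set.EqOn (fun y : ℝ => if s ^ 2 + (y / v) ^ 2 ≤ 1 then (1 : ℝ) else 2)
      (fun _ => 2) (Set.uIoc c b) := by
    intro y hy
    rw [Set.uIoc_of_le hcb] at hy
    have h : √(1 - s ^ 2) < y / v := by rw [lt_div_iff₀ hv]; linarith [hy.1]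
    have h' : 0 < y / v := (Real.sqrt_nonneg _).trans_lt h
    have := (Real.sqrt_lt' h').1 h
    exact if_neg (by linarith)
  rw [← intervalIntegral.integral_add_adjacent_intervals (b := c)
      ((intervalIntegrable_congr e1).2 intervalIntegrable_const)
      ((intervalIntegrable_congr e2).2 intervalIntegrable_const),
    intervalIntegral.integral_congr_ae (.of_forall e1),
    intervalIntegral.integral_congr_ae (.of_forall e2)]
  simp only [intervalIntegral.integral_const, smul_eq_mul]
  ring

/-- **Corollary 1** (efficiency bound of a two-layer infinite 3D array): with the
squared active reflection coefficient `f_γ` equal to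
`1 − (1 + cos(γ − (2π d_z/λ) cos θ))/2` inside the feasible region `D` and `1`
outside, the embedded element efficiency
`1 − (1/(2π²)) ∬ (f_0 + f_π)` equals `π d_x d_y / (2λ²)`, which is one half of the
2D Hannan limit `π d_x d_y / λ²`. -/
theorem two_layer_3d_efficiency_bound
    (lam dx dy dz : ℝ) (hlam : 0 < lam)
    (hdx : 0 < dx) (hdx' : dx ≤ lam / 2) (hdy : 0 < dy) (hdy' : dy ≤ lam / 2)
    (hdz : 0 < dz)
    (D : Set (ℝ × ℝ))
    (hD : D = {p : ℝ × ℝ | p.1 ∈ Set.Icc 0 π ∧ p.2 ∈ Set.Icc 0 π ∧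
      (lam * p.1 / (2 * π * dx)) ^ 2 + (lam * p.2 / (2 * π * dy)) ^ 2 ≤ 1})
    (f : ℝ → ℝ × ℝ → ℝ)
    (hf : ∀ (γ : ℝ) (p : ℝ × ℝ), p ∈ Set.Icc (0 : ℝ) π ×ˢ Set.Icc (0 : ℝ) π →
      f γ p = if p ∈ D then
        1 - (1 + Real.cos (γ - (2 * π * dz / lam) *
          Real.sqrt (1 - (lam * p.1 / (2 * π * dx)) ^ 2 - (lam * p.2 / (2 * π * dy)) ^ 2))) / 2
      else 1) :
    1 - (1 / (2 * π ^ 2)) *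
        (∫ α in (0 : ℝ)..π, ∫ β in (0 : ℝ)..π, (f 0 (α, β) + f π (α, β))) =
      π * dx * dy / (2 * lam ^ 2) ∧
    π * dx * dy / (2 * lam ^ 2) = (1 / 2) * (π * dx * dy / lam ^ 2) := by
  refine ⟨?_, by ring⟩
  have hpi := Real.pi_pos
  set u := 2 * π * dx / lam with hu
  set v := 2 * π * dy / lam with hv
  have hu0 : 0 < u := by positivity
  have hv0 : 0 < v := by positivity
  have hupi : u ≤ π := by rw [hu, div_le_iff₀ hlam]; nlinarith
  have hvpi : v ≤ π := by rw [hv, div_le_iff₀ hlam]; nlinarith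
  have hux (x : ℝ) : lam * x / (2 * π * dx) = x / u := by rw [hu]; field_simp
  have hvy (y : ℝ) : lam * y / (2 * π * dy) = y / v := by rw [hv]; field_simp
  have hsum : ∀ x ∈ Set.Icc (0 : ℝ) π, ∀ y ∈ Set.Icc (0 : ℝ) π,
      f 0 (x, y) + f π (x, y) = if (x / u) ^ 2 + (y / v) ^ 2 ≤ 1 then (1 : ℝ) else 2 := by
    intro x hx y hy
    have hmem : (x, y) ∈ D ↔ (x / u) ^ 2 + (y / v) ^ 2 ≤ 1 := by
      rw [hD, Set.mem_ofPred_eq, hux, hvy]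
      exact ⟨fun h => h.2.2, fun h => ⟨hx, hy, h⟩⟩
    rw [hf 0 _ ⟨hx, hy⟩, hf π _ ⟨hx, hy⟩]
    by_cases h : (x / u) ^ 2 + (y / v) ^ 2 ≤ 1
    · rw [if_pos (hmem.2 h), if_pos (hmem.2 h), if_pos h, zero_sub, Real.cos_neg,
        Real.cos_pi_sub]
      ring
    · rw [if_neg (mt hmem.1 h), if_neg (mt hmem.1 h), if_neg h]
      norm_num
  have hinner : Set.EqOn (fun x => ∫ y in (0 : ℝ)..π, (f 0 (x, y) + f π (x, y)))
      (fun x => 2 * π - v * √(1 - (x / u) ^ 2)) (Set.uIcc 0 π) := by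
    intro x hx
    rw [Set.uIcc_of_le hpi.le] at hx
    simp only
    rw [← integral_ellipse_slice (x / u) hv0 hvpi]
    refine intervalIntegral.integral_congr fun y hy => ?_
    rw [Set.uIcc_of_le hpi.le] at hy
    simpa using hsum x hx y hy
  have hc : Continuous fun x : ℝ => v * √(1 - (x / u) ^ 2) := by fun_prop
  rw [intervalIntegral.integral_congr hinner, intervalIntegral.integral_sub
    intervalIntegrable_const (hc.intervalIntegrable _ _), intervalIntegral.integral_const,
    intervalIntegral.integral_const_mul, integral_sqrt_slice hu0 hupi, smul_eq_mul, hu, hv]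
  field_simp
  ring
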